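/- arXiv:2205.15216 — 2 statements merged into one kernel-verified Lean document; each statement's English description precedes it below -/
import Mathlib

section
/- For any 1/2 < t < 1 and any real x ≥ 2e^{16/(1-t)²}, one has (7/40)·x^{1-t}/((1-t)(log x)^t) < ∑_{n ≤ x-1} p_n^{-t} < (20/3)·x^{1-t}/((1-t)(log x)^t), where the sum ranges over all positive integers n with n ≤ x−1. -/
/-- The `n`-th prime number, 1-indexed: `nthPrime 1 = 2`, `nthPrime 2 = 3`, ... -/
noncomputable def nthPrime (n : ℕ) : ℕ := Nat.nth Nat.Prime (n - 1)

open Real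

lemma primeCounting_nthPrime {n : ℕ} (hn : 1 ≤ n) : Nat.primeCounting (nthPrime n) = n := by
  unfold nthPrime Nat.primeCounting Nat.primeCounting'
  rw [Nat.count_nth_succ_of_infinite Nat.infinite_setOfPred_prime]
  omega

lemma add_one_le_nthPrime {n : ℕ} (hn : 1 ≤ n) : n + 1 ≤ nthPrime n := by
  have := Nat.add_two_le_nth_prime (n - 1)
  unfold nthPrime
  omega

lemma rpow_add_le_tangent {a d s : ℝ} (ha : 0 < a) (hd : -a ≤ d) (hs₀ : 0 ≤ s) (hs₁ : s ≤ 1) :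
    (a + d) ^ s ≤ a ^ s + s * d * a ^ (s - 1) := by
  have hda : -1 ≤ d / a := by rw [le_div_iff₀ ha]; linarith
  have h := rpow_one_add_le_one_add_mul_self hda hs₀ hs₁
  have e : a + d = a * (1 + d / a) := by field_simp
  rw [e, mul_rpow ha.le (by linarith), rpow_sub_one ha.ne']
  calc a ^ s * (1 + d / a) ^ s ≤ a ^ s * (1 + s * (d / a)) := by gcongr
    _ = _ := by ring

lemma sum_rpow_neg_le {t : ℝ} (ht₀ : 0 ≤ t) (ht₁ : t < 1) (N : ℕ) :
    ∑ n ∈ Finset.Icc 1 N, (n : ℝ) ^ (-t) ≤ (N : ℝ) ^ (1 - t) / (1 - t) := by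
  have hs : 0 < 1 - t := by linarith
  induction N with
  | zero => simp [zero_rpow hs.ne']
  | succ k ih =>
    rw [Finset.sum_Icc_succ_top (by omega)]
    have h := rpow_add_le_tangent (a := ((k + 1 : ℕ) : ℝ)) (d := -1) (s := 1 - t)
      (by positivity) (by push_cast; linarith [k.cast_nonneg (α := ℝ)]) hs.le (by linarith)
    rw [show ((k + 1 : ℕ) : ℝ) + -1 = k by push_cast; ring,
      show 1 - t - 1 = -t by ring] at h
    rw [le_div_iff₀ hs] at ih ⊢
    linarith

lemma le_sum_rpow_neg {t : ℝ} (ht₀ : 0 ≤ t) (ht₁ : t < 1) (N : ℕ) :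
    (((N : ℝ) + 1) ^ (1 - t) - 1) / (1 - t) ≤ ∑ n ∈ Finset.Icc 1 N, (n : ℝ) ^ (-t) := by
  have hs : 0 < 1 - t := by linarith
  induction N with
  | zero => simp
  | succ k ih =>
    rw [Finset.sum_Icc_succ_top (by omega)]
    have h := rpow_add_le_tangent (a := ((k + 1 : ℕ) : ℝ)) (d := 1) (s := 1 - t)
      (by positivity) (by linarith [(k + 1).cast_nonneg (α := ℝ)]) hs.le (by linarith)
    rw [show 1 - t - 1 = -t by ring] at h
    rw [div_le_iff₀ hs] at ih ⊢
    push_cast at *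
    linarith

lemma nthPrime_le {n : ℕ} {x : ℝ} (hx : 64 ≤ log x) (hx₀ : 0 < x) (hn : 1 ≤ n)
    (hnx : (n : ℝ) + 1 ≤ x) : (nthPrime n : ℝ) ≤ 5 * n * log x := by
  set p := nthPrime n with hp
  have hpn : n + 1 ≤ p := add_one_le_nthPrime hn
  have hn₁ : (1 : ℝ) ≤ n := by exact_mod_cast hn
  have hp₂ : (2 : ℝ) ≤ p := by exact_mod_cast (by omega : 2 ≤ p)
  have hlogp : 0 < log p := log_pos (by linarith)
  have hlogle : log p ≤ log (p + 1) := log_le_log (by linarith) (by linarith)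
  have hpi := Chebyshev.pi_ge p
  rw [hp, primeCounting_nthPrime hn, ← hp, div_le_iff₀ hlogp] at hpi
  have hl2 := log_two_gt_d9
  have hmain : (p : ℝ) * log 2 ≤ (n + 1) * log (p + 1) := by nlinarith
  have hlog : log (p + 1) ≤ 3 / 2 * log x := by
    by_contra! hc
    set u := log ((p : ℝ) + 1) with hu
    set w := exp (u / 6) with hw
    have hw17 : 17 ≤ w := by have := add_one_le_exp (u / 6); linarith
    have hpw : (p : ℝ) + 1 = w ^ 6 := by
      rw [hw, ← exp_nat_mul, ← exp_log (by linarith : (0 : ℝ) < p + 1), ← hu]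
      congr 1; push_cast; ring
    have hxw : x ≤ w ^ 4 := by
      rw [hw, ← exp_nat_mul, ← exp_log hx₀]
      apply exp_le_exp.mpr; push_cast; linarith
    have huw : u ≤ 6 * w := by have := add_one_le_exp (u / 6); linarith
    have h₁ : ((n : ℝ) + 1) * u ≤ w ^ 4 * (6 * w) := by
      apply mul_le_mul (by linarith) huw (by linarith) (by positivity)
    have h₂ : 17 * w ^ 5 ≤ w ^ 6 := by
      rw [pow_succ w 5, mul_comm]; gcongr
    have h₃ : 1 ≤ w ^ 5 := one_le_pow₀ (by linarith)
    nlinarith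
  have : (p : ℝ) * 0.693 ≤ 2 * n * (3 / 2 * log x) := by
    calc (p : ℝ) * 0.693 ≤ p * log 2 := by gcongr; linarith
      _ ≤ (n + 1) * log (p + 1) := hmain
      _ ≤ 2 * n * (3 / 2 * log x) := by
        apply mul_le_mul (by linarith) hlog (by linarith) (by linarith)
  have : 0 < n * log x := by positivity
  linarith

lemma le_nthPrime {n : ℕ} (hn : 32 ≤ log n) : (n : ℝ) * log n ≤ 3 * nthPrime n := by
  have hn₁ : 1 ≤ n := by
    rcases Nat.eq_zero_or_pos n with h | h
    · simp [h] at hn; linarith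
    · exact h
  have hn₀ : (0 : ℝ) < n := by exact_mod_cast hn₁
  set p := nthPrime n with hp
  have hpn : n + 1 ≤ p := add_one_le_nthPrime hn₁
  have hpn' : (n : ℝ) + 1 ≤ p := by exact_mod_cast hpn
  have hlog : log n ≤ log p := log_le_log hn₀ (by linarith)
  have hpi := Chebyshev.pi_le_log4_mul_div (x := (p : ℝ)) (by linarith)
  have hp₀ : (0 : ℝ) < p := by linarith
  rw [Nat.floor_natCast, hp, primeCounting_nthPrime hn₁, ← hp, log_sqrt hp₀.le] at hpi
  set w := log (p : ℝ) with hw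
  set v := exp (w / 8) with hv
  have hvw : w / 8 + 1 ≤ v := add_one_le_exp (w / 8)
  have hsq : √(p : ℝ) = v ^ 4 := by
    rw [sqrt_eq_iff_mul_self_eq_of_pos (by positivity), hv, ← exp_nat_mul, ← exp_add]
    conv_rhs => rw [← exp_log hp₀]
    congr 1; push_cast; ring
  have hpv : (p : ℝ) = v ^ 4 * v ^ 4 := by rw [← hsq, mul_self_sqrt hp₀.le]
  have hw₀ : 0 < w := by linarith
  have hl4 : log 4 < 1.3863 := by
    rw [show (4 : ℝ) = 2 ^ 2 by norm_num, log_pow]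
    have := log_two_lt_d9
    push_cast; linarith
  have hwv : w ≤ 0.2 * v ^ 4 := by
    have h₁ : 5 * v ≤ v ^ 2 := by nlinarith
    have h₂ : 25 * (5 * v) ≤ v ^ 2 * v ^ 2 := by nlinarith
    nlinarith
  have hsw : √(p : ℝ) * w ≤ 0.2 * p := by
    rw [hsq, hpv]
    have := mul_le_mul_of_nonneg_left hwv (show 0 ≤ v ^ 4 by positivity)
    linarith
  have hnw : (n : ℝ) * w ≤ 2 * log 4 * p + √(p : ℝ) * w := by
    calc (n : ℝ) * w ≤ (log 4 * p / (w / 2) + √(p : ℝ)) * w := by gcongr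
      _ = _ := by field_simp
  calc (n : ℝ) * log n ≤ n * w := by gcongr
    _ ≤ 3 * p := by nlinarith

lemma sum_nthPrime_rpow_neg_le {t x : ℝ} (ht₀ : 0 < t) (ht₁ : t < 1) (hx₀ : 0 < x)
    (hx : 64 ≤ log x) (N : ℕ) (hN : (N : ℝ) ≤ x) :
    ∑ n ∈ Finset.Icc 1 N, (nthPrime n : ℝ) ^ (-t) ≤
      √x ^ (1 - t) / (1 - t) + (log x / 6) ^ (-t) * (x ^ (1 - t) / (1 - t)) := by
  have hs : 0 < 1 - t := by linarith
  have hterm : ∀ n ∈ Finset.Icc 1 N, (nthPrime n : ℝ) ^ (-t) ≤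
      (if n ≤ ⌊√x⌋₊ then (n : ℝ) ^ (-t) else 0) + (log x / 6) ^ (-t) * (n : ℝ) ^ (-t) := by
    intro n hn
    have hn₁ := (Finset.mem_Icc.mp hn).1
    have hn₀ : (0 : ℝ) < n := by exact_mod_cast hn₁
    have hpn : (n : ℝ) + 1 ≤ nthPrime n := by exact_mod_cast add_one_le_nthPrime hn₁
    split_ifs with h
    · have : (nthPrime n : ℝ) ^ (-t) ≤ (n : ℝ) ^ (-t) :=
        rpow_le_rpow_of_nonpos hn₀ (by linarith) (by linarith)
      have : 0 ≤ (log x / 6) ^ (-t) * (n : ℝ) ^ (-t) := by positivity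
      linarith
    · have hsn : √x < n := (Nat.floor_lt (sqrt_nonneg x)).mp (not_le.mp h)
      have hlog : log x / 2 ≤ log n := by
        rw [← log_sqrt hx₀.le]; exact log_le_log (sqrt_pos.mpr hx₀) hsn.le
      have hp := le_nthPrime (n := n) (by linarith)
      rw [zero_add, ← mul_rpow (by linarith) hn₀.le]
      exact rpow_le_rpow_of_nonpos (by positivity) (by nlinarith) (by linarith)
  refine (Finset.sum_le_sum hterm).trans ?_
  rw [Finset.sum_add_distrib, ← Finset.mul_sum, ← Finset.sum_filter]
  gcongr ?_ + _ * ?_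
  · calc _ ≤ ∑ n ∈ Finset.Icc 1 ⌊√x⌋₊, (n : ℝ) ^ (-t) := by
          apply Finset.sum_le_sum_of_subset_of_nonneg
          · intro n hn
            simp only [Finset.mem_filter, Finset.mem_Icc] at hn ⊢
            exact ⟨hn.1.1, hn.2⟩
          · intros; positivity
      _ ≤ (⌊√x⌋₊ : ℝ) ^ (1 - t) / (1 - t) := sum_rpow_neg_le ht₀.le ht₁ _
      _ ≤ _ := by gcongr; exact Nat.floor_le (sqrt_nonneg x)
  · exact (sum_rpow_neg_le ht₀.le ht₁ N).trans (by gcongr)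

lemma le_sum_nthPrime_rpow_neg {t x : ℝ} (ht₀ : 0 < t) (ht₁ : t < 1) (hx₀ : 0 < x)
    (hx : 64 ≤ log x) (N : ℕ) (hN : (N : ℝ) + 1 ≤ x) :
    (5 * log x) ^ (-t) * ((((N : ℝ) + 1) ^ (1 - t) - 1) / (1 - t)) ≤
      ∑ n ∈ Finset.Icc 1 N, (nthPrime n : ℝ) ^ (-t) := by
  calc _ ≤ (5 * log x) ^ (-t) * ∑ n ∈ Finset.Icc 1 N, (n : ℝ) ^ (-t) := by
        gcongr; exact le_sum_rpow_neg ht₀.le ht₁ N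
    _ ≤ _ := by
      rw [Finset.mul_sum]
      refine Finset.sum_le_sum fun n hn => ?_
      obtain ⟨hn₁, hnN⟩ := Finset.mem_Icc.mp hn
      have hnN' : (n : ℝ) ≤ N := by exact_mod_cast hnN
      have hpn : (n : ℝ) + 1 ≤ nthPrime n := by exact_mod_cast add_one_le_nthPrime hn₁
      rw [← mul_rpow (by linarith) n.cast_nonneg]
      refine rpow_le_rpow_of_nonpos (by linarith [n.cast_nonneg (α := ℝ)]) ?_ (by linarith)
      have := nthPrime_le hx hx₀ hn₁ (by linarith)
      linarith


lemma two_mul_log_le_sqrt_rpow {s x : ℝ} (hs : 0 < s) (hx₀ : 0 < x) (hx : 64 ≤ log x)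
    (hsx : 16 ≤ s ^ 2 * log x) : 2 * log x ≤ √x ^ s := by
  set r := √(log x) with hr
  have hrr : r * r = log x := mul_self_sqrt (by linarith)
  have hr8 : 8 ≤ r := by
    rw [hr, le_sqrt (by norm_num) (by linarith)]; linarith
  have hsr : 4 ≤ s * r := by
    rw [← hrr] at hsx
    nlinarith [mul_pos hs (by linarith : 0 < r)]
  have h₁ : r / 2 + 1 ≤ exp (r / 2) := add_one_le_exp _
  have h₂ : exp (r / 2) ^ 4 ≤ √x ^ s := by
    rw [rpow_def_of_pos (sqrt_pos.mpr hx₀), log_sqrt hx₀.le, ← exp_nat_mul]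
    apply exp_le_exp.mpr
    rw [← hrr]; push_cast; nlinarith
  have h₃ : (r / 2 + 1) ^ 4 ≤ exp (r / 2) ^ 4 := by gcongr
  have h₄ : 2 * (r * r) ≤ (r / 2 + 1) ^ 4 := by
    have : 5 * r / 2 ≤ (r / 2 + 1) ^ 2 := by nlinarith
    have : (5 * r / 2) ^ 2 ≤ ((r / 2 + 1) ^ 2) ^ 2 := by gcongr
    nlinarith
  linarith

theorem sum_reciprocal_prime_powers_shifted_bounds
    (t x : ℝ) (ht₁ : 1 / 2 < t) (ht₂ : t < 1)
    (hx : 2 * Real.exp (16 / (1 - t) ^ 2) ≤ x) :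
    7 / 40 * (x ^ (1 - t) / ((1 - t) * Real.log x ^ t)) <
        (∑ n ∈ Finset.Icc 1 ⌊x - 1⌋₊, (nthPrime n : ℝ) ^ (-t)) ∧
      (∑ n ∈ Finset.Icc 1 ⌊x - 1⌋₊, (nthPrime n : ℝ) ^ (-t)) <
        20 / 3 * (x ^ (1 - t) / ((1 - t) * Real.log x ^ t)) := by
  have hs : 0 < 1 - t := by linarith
  have ht₀ : 0 < t := by linarith
  have hx₀ : 0 < x := lt_of_lt_of_le (by positivity) hx
  have hexpL : 16 / (1 - t) ^ 2 ≤ log x := by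
    rw [le_log_iff_exp_le hx₀]
    linarith [exp_pos (16 / (1 - t) ^ 2)]
  have hL : 64 ≤ log x := by
    refine le_trans ?_ hexpL
    rw [le_div_iff₀ (by positivity)]
    nlinarith
  have hx65 : 65 ≤ x := by
    have := add_one_le_exp (log x)
    rw [exp_log hx₀] at this
    linarith
  have hLpos : 0 < log x := by linarith
  have hsL : 16 ≤ (1 - t) ^ 2 * log x := by
    rwa [div_le_iff₀ (by positivity), mul_comm] at hexpL
  have hyL := two_mul_log_le_sqrt_rpow hs hx₀ hL hsL
  set y := √x ^ (1 - t) with hy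
  have hyx : x ^ (1 - t) = y * y := by
    rw [hy, ← mul_rpow (sqrt_nonneg x) (sqrt_nonneg x), mul_self_sqrt hx₀.le]
  have hLt : 0 < log x ^ t := by positivity
  have hfloor : (⌊x - 1⌋₊ : ℝ) + 1 ≤ x := by
    linarith [Nat.floor_le (show 0 ≤ x - 1 by linarith)]
  constructor
  · refine lt_of_lt_of_le ?_ (le_sum_nthPrime_rpow_neg ht₀ ht₂ hx₀ hL _ hfloor)
    have h₁ : 0.9 * (y * y) ≤ ((⌊x - 1⌋₊ : ℝ) + 1) ^ (1 - t) := by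
      have h0 : (0.9 : ℝ) ≤ 0.9 ^ (1 - t) :=
        self_le_rpow_of_le_one (by norm_num) (by norm_num) (by linarith)
      calc 0.9 * (y * y) ≤ 0.9 ^ (1 - t) * x ^ (1 - t) := by rw [hyx]; gcongr
        _ = (0.9 * x) ^ (1 - t) := by rw [mul_rpow (by norm_num) hx₀.le]
        _ ≤ _ := by
          gcongr
          linarith [Nat.lt_floor_add_one (x - 1)]
    have h₂ : (5 * log x ^ t)⁻¹ ≤ (5 * log x) ^ (-t) := by
      rw [rpow_neg (by positivity), mul_rpow (by norm_num) hLpos.le]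
      gcongr
      exact rpow_le_self_of_one_le (by norm_num) ht₂.le
    calc 7 / 40 * (x ^ (1 - t) / ((1 - t) * log x ^ t))
        < (5 * log x ^ t)⁻¹ * ((0.9 * (y * y) - 1) / (1 - t)) := by
          rw [hyx]
          have : 7 / 40 * (y * y) < (0.9 * (y * y) - 1) / 5 := by nlinarith
          calc _ = (7 / 40 * (y * y)) / ((1 - t) * log x ^ t) := by ring
            _ < ((0.9 * (y * y) - 1) / 5) / ((1 - t) * log x ^ t) := by gcongr
            _ = _ := by field_simp
      _ ≤ _ := by
        have : 0 ≤ 0.9 * (y * y) - 1 := by nlinarith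
        gcongr
  · refine lt_of_le_of_lt
      (sum_nthPrime_rpow_neg_le ht₀ ht₂ hx₀ hL ⌊x - 1⌋₊ (by linarith)) ?_
    rw [← hy]
    have h₁ : (log x / 6) ^ (-t) ≤ 6 / log x ^ t := by
      rw [rpow_neg (by positivity), div_rpow hLpos.le (by norm_num), inv_div]
      gcongr
      exact rpow_le_self_of_one_le (by norm_num) ht₂.le
    have h₂ : log x ^ t ≤ log x := rpow_le_self_of_one_le (by linarith) ht₂.le
    calc _ ≤ y / (1 - t) + 6 / log x ^ t * (x ^ (1 - t) / (1 - t)) := by gcongr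
      _ = (y * log x ^ t + 6 * (y * y)) / ((1 - t) * log x ^ t) := by
        rw [hyx]; field_simp
      _ < (20 / 3 * (y * y)) / ((1 - t) * log x ^ t) := by
        gcongr
        nlinarith
      _ = _ := by rw [hyx]; ring
end

section
/- There exists a smooth (C^∞) increasing function f : ℝ_{≥1} → ℝ_{≥1} and a positive constant C_P < 7 such that: (1) f(n) = p_n for every positive integer n; (2) for every positive integer n and every x ∈ [n, n+1], f'(x) ≤ C_P·(p_{n+1} − p_n). -/
theorem two_add_sq_div_two_le_exp_add_exp_neg (u : ℝ) :
    2 + u ^ 2 / 2 ≤ Real.exp u + Real.exp (-u) := by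
  rcases le_total 0 u with h | h
  · linarith [Real.quadratic_le_exp_of_nonneg h, Real.add_one_le_exp (-u)]
  · have := Real.quadratic_le_exp_of_nonneg (neg_nonneg.2 h)
    linarith [Real.add_one_le_exp u, neg_sq u]

namespace Real.smoothTransition

theorem eq_inv_one_add_exp {t : ℝ} (h0 : 0 < t) (h1 : t < 1) :
    smoothTransition t = (1 + exp (t⁻¹ - (1 - t)⁻¹))⁻¹ := by
  have h : exp (t⁻¹ - (1 - t)⁻¹) = exp (-(1 - t)⁻¹) / exp (-t⁻¹) := by
    rw [← exp_sub]; congr 1; ring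
  have := exp_pos (-t⁻¹)
  have := exp_pos (-(1 - t)⁻¹)
  rw [h, smoothTransition, expNegInvGlue, expNegInvGlue, if_neg h0.not_ge,
    if_neg (sub_pos.2 h1).not_ge]
  field_simp

theorem deriv_eq_zero_of_nonpos {t : ℝ} (h : t ≤ 0) : deriv smoothTransition t = 0 := by
  refine IsLocalMin.deriv_eq_zero (Filter.Eventually.of_forall fun y => ?_)
  rw [zero_of_nonpos h]
  exact nonneg y

theorem deriv_eq_zero_of_one_le {t : ℝ} (h : 1 ≤ t) : deriv smoothTransition t = 0 := by
  refine IsLocalMax.deriv_eq_zero (Filter.Eventually.of_forall fun y => ?_)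
  rw [one_of_one_le h]
  exact le_one y

theorem deriv_le_three (t : ℝ) : deriv smoothTransition t ≤ 3 := by
  rcases le_or_gt t 0 with h0 | h0
  · rw [deriv_eq_zero_of_nonpos h0]; norm_num
  rcases le_or_gt 1 t with h1 | h1
  · rw [deriv_eq_zero_of_one_le h1]; norm_num
  have h1' : 0 < 1 - t := sub_pos.2 h1
  set u := t⁻¹ - (1 - t)⁻¹ with hu
  have hd : HasDerivAt (fun s : ℝ => (1 + exp (s⁻¹ - (1 - s)⁻¹))⁻¹)
      (-(exp u * (-(t ^ 2)⁻¹ - -(-1) / (1 - t) ^ 2)) / (1 + exp u) ^ 2) t :=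
    ((((hasDerivAt_inv h0.ne').sub
      (((hasDerivAt_id t).const_sub 1).inv h1'.ne')).exp).const_add 1).inv
      (by positivity)
  have heq : smoothTransition =ᶠ[nhds t] fun s : ℝ => (1 + exp (s⁻¹ - (1 - s)⁻¹))⁻¹ := by
    filter_upwards [Ioo_mem_nhds h0 h1] with s hs using eq_inv_one_add_exp hs.1 hs.2
  rw [heq.deriv_eq, hd.deriv, div_le_iff₀ (by positivity)]
  set p := t * (1 - t) with hp
  have hp0 : 0 < p := mul_pos h0 h1'
  have hup : u * p = 1 - 2 * t := by rw [hu, hp]; field_simp; ring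
  have hsum : (t ^ 2)⁻¹ + 1 / (1 - t) ^ 2 = (1 - 2 * p) / p ^ 2 := by
    rw [hp]; field_simp; ring
  have hcosh := two_add_sq_div_two_le_exp_add_exp_neg u
  have hinv : exp u * exp (-u) = 1 := by rw [← exp_add]; simp
  have hmain : (1 - 2 * p) / p ^ 2 ≤ 3 * (4 + u ^ 2 / 2) := by
    rw [div_le_iff₀ (by positivity)]
    have : u ^ 2 * p ^ 2 = 1 - 4 * p := by rw [← mul_pow, hup, hp]; ring
    nlinarith [sq_nonneg (6 * p - 1)]
  calc -(exp u * (-(t ^ 2)⁻¹ - -(-1) / (1 - t) ^ 2))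
      = exp u * ((t ^ 2)⁻¹ + 1 / (1 - t) ^ 2) := by ring
    _ ≤ exp u * (3 * (2 + (exp u + exp (-u)))) := by
        rw [hsum]
        exact mul_le_mul_of_nonneg_left (by linarith) (exp_pos u).le
    _ = 3 * (1 + exp u) ^ 2 := by linear_combination 3 * hinv

theorem strictMonoOn : StrictMonoOn smoothTransition (Set.Icc 0 1) := by
  intro x hx y hy hxy
  have hx1 : 0 < expNegInvGlue (1 - x) :=
    expNegInvGlue.pos_of_pos (by linarith [hy.2])
  have hlt : expNegInvGlue x < expNegInvGlue y := by
    have hy0 : 0 < y := hx.1.trans_lt hxy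
    rcases hx.1.eq_or_lt with rfl | hx0
    · simpa using expNegInvGlue.pos_of_pos hy0
    · rw [expNegInvGlue, expNegInvGlue, if_neg hx0.not_ge, if_neg hy0.not_ge, exp_lt_exp,
        neg_lt_neg_iff]
      exact inv_strictAnti₀ hx0 hxy
  have hle : expNegInvGlue (1 - y) ≤ expNegInvGlue (1 - x) :=
    expNegInvGlue.monotone (by linarith)
  rw [smoothTransition, smoothTransition, div_lt_div_iff₀ (pos_denom x) (pos_denom y)]
  nlinarith [mul_le_mul_of_nonneg_left hle (expNegInvGlue.nonneg x),
    mul_lt_mul_of_pos_right hlt hx1]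

end Real.smoothTransition

/-- The function interpolating `a` at the natural numbers which, between consecutive naturals,
is a rescaled copy of `Real.smoothTransition`. -/
noncomputable def smoothInterp (a : ℕ → ℝ) (x : ℝ) : ℝ :=
  a 0 + ∑ k ∈ Finset.range ⌈x⌉₊, (a (k + 1) - a k) * Real.smoothTransition (x - k)

namespace smoothInterp

open Real

variable {a : ℕ → ℝ}

theorem eq_sum_range {x : ℝ} {N : ℕ} (h : x ≤ N) :
    smoothInterp a x =
      a 0 + ∑ k ∈ Finset.range N, (a (k + 1) - a k) * smoothTransition (x - k) := by
  rw [smoothInterp]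
  congr 1
  refine Finset.sum_subset (Finset.range_subset_range.2 (Nat.ceil_le.2 h)) fun k _ hk => ?_
  rw [Finset.mem_range, not_lt, Nat.ceil_le] at hk
  rw [smoothTransition.zero_of_nonpos (sub_nonpos.2 hk), mul_zero]

theorem eventuallyEq_sum_range {x : ℝ} {N : ℕ} (h : x < N) :
    smoothInterp a =ᶠ[nhds x] fun y =>
      a 0 + ∑ k ∈ Finset.range N, (a (k + 1) - a k) * smoothTransition (y - k) := by
  filter_upwards [Iio_mem_nhds h] with y hy using eq_sum_range (le_of_lt hy)

theorem eq_of_mem_Icc {n : ℕ} {x : ℝ} (hx : x ∈ Set.Icc (n : ℝ) (n + 1)) :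
    smoothInterp a x = a n + (a (n + 1) - a n) * smoothTransition (x - n) := by
  have hsum : ∑ k ∈ Finset.range n, (a (k + 1) - a k) * smoothTransition (x - k) =
      a n - a 0 := by
    rw [← Finset.sum_range_sub]
    refine Finset.sum_congr rfl fun k hk => ?_
    have : (k : ℝ) + 1 ≤ n := by exact_mod_cast Finset.mem_range.1 hk
    rw [smoothTransition.one_of_one_le (by linarith [hx.1]), mul_one]
  rw [eq_sum_range (N := n + 1) (by exact_mod_cast hx.2), Finset.sum_range_succ, hsum]
  ring

theorem apply_natCast (n : ℕ) : smoothInterp a n = a n := by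
  rw [eq_of_mem_Icc (n := n) (by simp)]
  simp

protected theorem contDiff {m : ℕ∞} : ContDiff ℝ m (smoothInterp a) := by
  rw [contDiff_iff_contDiffAt]
  intro x
  obtain ⟨N, hN⟩ := exists_nat_gt x
  refine ContDiffAt.congr_of_eventuallyEq ?_ (eventuallyEq_sum_range hN)
  refine (contDiff_const.add (ContDiff.sum fun k _ => contDiff_const.mul ?_)).contDiffAt
  exact smoothTransition.contDiff.comp (contDiff_id.sub contDiff_const)

theorem deriv_eq_of_mem_Icc {n : ℕ} {x : ℝ} (hx : x ∈ Set.Icc (n : ℝ) (n + 1)) :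
    deriv (smoothInterp a) x = (a (n + 1) - a n) * deriv smoothTransition (x - n) := by
  have hN : x < (n + 2 : ℕ) := by push_cast; linarith [hx.2]
  have hd : HasDerivAt (fun y => a 0 +
      ∑ k ∈ Finset.range (n + 2), (a (k + 1) - a k) * smoothTransition (y - k))
      (∑ k ∈ Finset.range (n + 2), (a (k + 1) - a k) * deriv smoothTransition (x - k)) x := by
    refine (HasDerivAt.fun_sum fun k _ => HasDerivAt.const_mul _ ?_).const_add _
    exact HasDerivAt.comp_sub_const x (k : ℝ)
      ((smoothTransition.contDiff (n := 1)).differentiable (by simp) _).hasDerivAt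
  rw [(eventuallyEq_sum_range hN).deriv_eq, hd.deriv]
  refine Finset.sum_eq_single_of_mem n (by simp) fun k _ hkn => ?_
  rcases hkn.lt_or_gt with hk | hk
  · have : (k : ℝ) + 1 ≤ n := by exact_mod_cast hk
    rw [smoothTransition.deriv_eq_zero_of_one_le (by linarith [hx.1]), mul_zero]
  · have : (n : ℝ) + 1 ≤ k := by exact_mod_cast hk
    rw [smoothTransition.deriv_eq_zero_of_nonpos (by linarith [hx.2]), mul_zero]

protected theorem monotone (ha : Monotone a) : Monotone (smoothInterp a) := by
  intro x y hxy
  obtain ⟨N, hN⟩ := exists_nat_ge y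
  rw [eq_sum_range hN, eq_sum_range (hxy.trans hN)]
  refine add_le_add_right (Finset.sum_le_sum fun k _ => ?_) _
  exact mul_le_mul_of_nonneg_left (smoothTransition.monotone (by linarith))
    (sub_nonneg.2 (ha k.le_succ))

protected theorem strictMonoOn (ha : StrictMono a) :
    StrictMonoOn (smoothInterp a) (Set.Ici 0) := by
  intro x hx y _ hxy
  set n := ⌊x⌋₊
  have hnx : (n : ℝ) ≤ x := Nat.floor_le hx
  have hxn : x < n + 1 := Nat.lt_floor_add_one x
  have hz : x < min y (n + 1) := lt_min hxy hxn
  refine lt_of_lt_of_le ?_ (smoothInterp.monotone ha.monotone (min_le_left y (n + 1)))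
  have hz1 : min y (n + 1 : ℝ) ≤ n + 1 := min_le_right _ _
  rw [eq_of_mem_Icc (n := n) ⟨hnx, hxn.le⟩, eq_of_mem_Icc (n := n) ⟨hnx.trans hz.le, hz1⟩]
  refine add_lt_add_right (mul_lt_mul_of_pos_left ?_ (sub_pos.2 (ha n.lt_succ_self))) _
  exact smoothTransition.strictMonoOn ⟨by linarith, by linarith⟩ ⟨by linarith, by linarith⟩
    (by linarith)

end smoothInterp

theorem exists_smooth_interpolation_of_primes :
    ∃ (f : ℝ → ℝ) (C_P : ℝ),
      0 < C_P ∧ C_P < 7 ∧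
      ContDiffOn ℝ (⊤ : ℕ∞) f (Set.Ici 1) ∧
      StrictMonoOn f (Set.Ici 1) ∧
      (∀ x : ℝ, 1 ≤ x → 1 ≤ f x) ∧
      (∀ n : ℕ, 1 ≤ n → f (n : ℝ) = (nthPrime n : ℝ)) ∧
      (∀ n : ℕ, 1 ≤ n → ∀ x ∈ Set.Icc (n : ℝ) ((n : ℝ) + 1),
        derivWithin f (Set.Ici 1) x ≤ C_P * ((nthPrime (n + 1) : ℝ) - (nthPrime n : ℝ))) := by
  set a : ℕ → ℝ := fun k => (Nat.nth Nat.Prime k : ℝ) with ha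
  have hmono : StrictMono a :=
    Nat.strictMono_cast.comp (Nat.nth_strictMono Nat.infinite_setOfPred_prime)
  have hsmooth : ContDiff ℝ (⊤ : ℕ∞) fun x => smoothInterp a (x - 1) :=
    smoothInterp.contDiff.comp (contDiff_id.sub contDiff_const)
  refine ⟨fun x => smoothInterp a (x - 1), 3, by norm_num, by norm_num, hsmooth.contDiffOn,
    ?_, ?_, ?_, ?_⟩
  · intro x hx y hy hxy
    exact smoothInterp.strictMonoOn hmono (Set.mem_Ici.2 (sub_nonneg.2 hx))
      (Set.mem_Ici.2 (sub_nonneg.2 hy)) (by linarith)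
  · intro x hx
    have h := smoothInterp.monotone hmono.monotone (sub_nonneg.2 hx)
    have h0 : smoothInterp a 0 = 2 := by
      simpa [ha, Nat.nth_prime_zero_eq_two] using smoothInterp.apply_natCast (a := a) 0
    dsimp only
    linarith
  · intro n hn
    obtain ⟨m, rfl⟩ := Nat.exists_eq_add_of_le' hn
    simpa [ha, nthPrime] using smoothInterp.apply_natCast (a := a) m
  · intro n hn x hx
    obtain ⟨m, rfl⟩ := Nat.exists_eq_add_of_le' hn
    push_cast at hx
    have hx1 : x ∈ Set.Ici (1 : ℝ) := by
      have : (0 : ℝ) ≤ m := m.cast_nonneg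
      exact Set.mem_Ici.2 (by linarith [hx.1])
    rw [(hsmooth.differentiable (by simp) x).derivWithin (uniqueDiffOn_Ici 1 x hx1),
      deriv_comp_sub_const,
      smoothInterp.deriv_eq_of_mem_Icc (n := m) ⟨by linarith [hx.1], by linarith [hx.2]⟩,
      mul_comm]
    exact mul_le_mul_of_nonneg_right (Real.smoothTransition.deriv_le_three _)
      (sub_nonneg.2 (hmono m.lt_succ_self).le)
end
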